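/- arXiv:1504.00538 — 2 statements merged into one kernel-verified Lean document; each statement's English description precedes it below -/
import Mathlib

section
/- Let Y ∈ ℝ^{m×p} and 1 ≤ r ≤ m with σ_r(Y) > σ_{r+1}(Y), and let Y^k ∈ ℝ^{m×p} be a sequence with Y^k → Y as k → ∞. Suppose X ∈ O_{m×r} satisfies the uniqueness conditions for (Y,r). Then there exists an integer k₀ such that for all k ≥ k₀, X satisfies the uniqueness conditions for (Y^k,r), and the unique minimizers T_{Y^k,r}(X) of ‖Z − X‖_F² over H_{Y^k,r} converge to T_{Y,r}(X) as k → ∞. -/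
open Matrix BigOperators Filter

/-- The squared Frobenius norm of a real matrix. -/
def froSq {ι κ : Type*} [Fintype ι] [Fintype κ] (M : Matrix ι κ ℝ) : ℝ :=
  ∑ i, ∑ j, (M i j) ^ 2

/-- The Frobenius norm of a real matrix. -/
noncomputable def fro {ι κ : Type*} [Fintype ι] [Fintype κ] (M : Matrix ι κ ℝ) : ℝ :=
  Real.sqrt (froSq M)

/-- The eigenvalues of `Y * Yᴴ`, sorted in descending order. -/
noncomputable def eigList {m : ℕ} {κ : Type*} [Fintype κ] (Y : Matrix (Fin m) κ ℝ) : List ℝ :=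
  ((((Finset.univ : Finset (Fin m)).val.map
      (fun j => (Matrix.isHermitian_mul_conjTranspose_self Y).eigenvalues j)).sort (· ≤ ·)).reverse)

/-- The `i`-th largest singular value (1-indexed) of a real matrix, with the
convention that it is `0` beyond the smaller matrix dimension. -/
noncomputable def sval {m : ℕ} {κ : Type*} [Fintype κ] (Y : Matrix (Fin m) κ ℝ) (i : ℕ) : ℝ :=
  Real.sqrt ((eigList Y).getD (i - 1) 0)

/-- The set of `m × r` real matrices with orthonormal columns. -/
def Stiefel (m r : ℕ) : Set (Matrix (Fin m) (Fin r) ℝ) :=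
  {Z | Zᵀ * Z = 1}

/-- `H_{Y,r}`: the set of maximizers of `‖Zᵀ Y‖_F²` over the Stiefel manifold. -/
def HSet {m p : ℕ} (Y : Matrix (Fin m) (Fin p) ℝ) (r : ℕ) : Set (Matrix (Fin m) (Fin r) ℝ) :=
  {Z | Z ∈ Stiefel m r ∧ ∀ W ∈ Stiefel m r, froSq (Wᵀ * Y) ≤ froSq (Zᵀ * Y)}

/-- The nuclear norm: the sum of all singular values. -/
noncomputable def nuclearNorm {a b : ℕ} (M : Matrix (Fin a) (Fin b) ℝ) : ℝ :=
  ∑ i ∈ Finset.range (min a b), sval M (i + 1)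

/-- `U` maximizes `‖Uᵀ X‖_*` over `H_{Y,r}`. -/
def NucMax {m p r : ℕ} (Y : Matrix (Fin m) (Fin p) ℝ) (X U : Matrix (Fin m) (Fin r) ℝ) : Prop :=
  U ∈ HSet Y r ∧ ∀ V ∈ HSet Y r, nuclearNorm (Vᵀ * X) ≤ nuclearNorm (Uᵀ * X)

/-- The uniqueness conditions for `(Y, r)` at `X`. -/
def UniqCond {m p : ℕ} (Y : Matrix (Fin m) (Fin p) ℝ) (r : ℕ)
    (X : Matrix (Fin m) (Fin r) ℝ) : Prop :=
  (∀ U, NucMax Y X U → (Uᵀ * X).det ≠ 0) ∧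
  (∀ U₁ U₂, NucMax Y X U₁ → NucMax Y X U₂ → U₁ * U₁ᵀ = U₂ * U₂ᵀ)

/-- `Z` is a minimizer of `‖Z − X‖_F²` over `H_{Y,r}`. -/
def IsProj {m p r : ℕ} (Y : Matrix (Fin m) (Fin p) ℝ) (X Z : Matrix (Fin m) (Fin r) ℝ) : Prop :=
  Z ∈ HSet Y r ∧ ∀ W ∈ HSet Y r, froSq (Z - X) ≤ froSq (W - X)

/-- The trace inner product of two matrices. -/
noncomputable def tinner {a b : ℕ} (A B : Matrix (Fin a) (Fin b) ℝ) : ℝ :=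
  Matrix.trace (Aᵀ * B)


lemma froSq_eq_trace {a b : ℕ} (M : Matrix (Fin a) (Fin b) ℝ) : froSq M = trace (M * Mᵀ) := by
  simp [froSq, trace, mul_apply, sq]

lemma froSq_eq_trace' {a b : ℕ} (M : Matrix (Fin a) (Fin b) ℝ) : froSq M = trace (Mᵀ * M) := by
  rw [froSq_eq_trace, trace_mul_comm]

lemma froSq_nonneg {a b : ℕ} (M : Matrix (Fin a) (Fin b) ℝ) : 0 ≤ froSq M :=
  Finset.sum_nonneg fun _ _ => Finset.sum_nonneg fun _ _ => sq_nonneg _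

lemma entry_sq_le_froSq {a b : ℕ} (M : Matrix (Fin a) (Fin b) ℝ) (i : Fin a) (j : Fin b) :
    (M i j) ^ 2 ≤ froSq M := by
  unfold froSq
  calc (M i j) ^ 2 ≤ ∑ j, (M i j) ^ 2 :=
        Finset.single_le_sum (f := fun j => (M i j) ^ 2) (fun _ _ => sq_nonneg _) (Finset.mem_univ j)
    _ ≤ _ := Finset.single_le_sum (f := fun i => ∑ j, (M i j) ^ 2)
        (fun _ _ => Finset.sum_nonneg fun _ _ => sq_nonneg _) (Finset.mem_univ i)

lemma froSq_eq_zero {a b : ℕ} {M : Matrix (Fin a) (Fin b) ℝ} (h : froSq M = 0) : M = 0 := by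
  ext i j
  have := entry_sq_le_froSq M i j
  rw [h] at this
  simpa using pow_eq_zero_iff (two_ne_zero) |>.1 (le_antisymm this (sq_nonneg _))

lemma continuous_froSq {a b : ℕ} : Continuous (froSq : Matrix (Fin a) (Fin b) ℝ → ℝ) := by
  unfold froSq
  refine continuous_finsetSum _ fun i _ => continuous_finsetSum _ fun j _ => ?_
  exact (continuous_id.matrix_elem i j).pow 2

lemma tendsto_of_fro {a b : ℕ} {A : ℕ → Matrix (Fin a) (Fin b) ℝ} {B : Matrix (Fin a) (Fin b) ℝ}
    (h : Tendsto (fun k => fro (A k - B)) atTop (nhds 0)) : Tendsto A atTop (nhds B) := by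
  refine tendsto_pi_nhds.2 fun i => tendsto_pi_nhds.2 fun j => ?_
  rw [tendsto_iff_dist_tendsto_zero]
  refine squeeze_zero (fun _ => dist_nonneg) (fun k => ?_) h
  rw [Real.dist_eq, ← Real.sqrt_sq_eq_abs]
  exact Real.sqrt_le_sqrt (by simpa using entry_sq_le_froSq (A k - B) i j)

lemma tendsto_fro {a b : ℕ} {A : ℕ → Matrix (Fin a) (Fin b) ℝ} {B : Matrix (Fin a) (Fin b) ℝ}
    (h : Tendsto A atTop (nhds B)) : Tendsto (fun k => fro (A k - B)) atTop (nhds 0) := by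
  have hc : Continuous (fun M : Matrix (Fin a) (Fin b) ℝ => fro (M - B)) :=
    Real.continuous_sqrt.comp (continuous_froSq.comp (continuous_id.sub continuous_const))
  have := (hc.tendsto B).comp h
  simpa [fro, froSq, Function.comp_def] using this

lemma firstCountable_matrix (m r : ℕ) : FirstCountableTopology (Matrix (Fin m) (Fin r) ℝ) :=
  inferInstanceAs (FirstCountableTopology (Fin m → Fin r → ℝ))

lemma isCompact_stiefel (m r : ℕ) : IsCompact (Stiefel m r) := by
  have hK : IsCompact (Set.pi Set.univ (fun _ : Fin m =>
      Set.pi Set.univ (fun _ : Fin r => Set.Icc (-1 : ℝ) 1))) :=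
    isCompact_univ_pi fun _ => isCompact_univ_pi fun _ => isCompact_Icc
  refine IsCompact.of_isClosed_subset (X := Matrix (Fin m) (Fin r) ℝ) hK ?_ ?_
  · exact isClosed_eq (continuous_id.matrix_transpose.matrix_mul continuous_id) continuous_const
  · intro Z hZ i _ j _
    have h1 : (Zᵀ * Z) j j = 1 := by rw [show Zᵀ * Z = 1 from hZ]; simp
    rw [mul_apply] at h1
    have h2 : (Z i j) ^ 2 ≤ 1 := by
      rw [← h1]
      simp only [transpose_apply, ← sq]
      exact Finset.single_le_sum (f := fun i => (Z i j) ^ 2) (fun _ _ => sq_nonneg _)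
        (Finset.mem_univ i)
    exact abs_le.1 ((sq_le_one_iff_abs_le_one _).1 h2)

lemma hset_limit {m p r : ℕ} {Y : Matrix (Fin m) (Fin p) ℝ} {Yk : ℕ → Matrix (Fin m) (Fin p) ℝ}
    (hYk : Tendsto Yk atTop (nhds Y)) {Zk : ℕ → Matrix (Fin m) (Fin r) ℝ}
    {Z : Matrix (Fin m) (Fin r) ℝ} (hZk : Tendsto Zk atTop (nhds Z))
    (h : ∀ᶠ k in atTop, Zk k ∈ HSet (Yk k) r) : Z ∈ HSet Y r := by
  refine ⟨(isCompact_stiefel m r).isClosed.mem_of_tendsto hZk (h.mono fun k hk => hk.1), ?_⟩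
  intro W hW
  have hc : Continuous (fun q : Matrix (Fin m) (Fin r) ℝ × Matrix (Fin m) (Fin p) ℝ =>
      froSq (q.1ᵀ * q.2)) :=
    continuous_froSq.comp (continuous_fst.matrix_transpose.matrix_mul continuous_snd)
  have t1 := (hc.tendsto (Z, Y)).comp (hZk.prodMk_nhds hYk)
  have t2 := (hc.tendsto (W, Y)).comp ((tendsto_const_nhds (x := W)).prodMk_nhds hYk)
  exact le_of_tendsto_of_tendsto t2 t1 (h.mono fun k hk => hk.2 W hW)

lemma hset_usc {m p r : ℕ} {Y : Matrix (Fin m) (Fin p) ℝ} {Yk : ℕ → Matrix (Fin m) (Fin p) ℝ}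
    (hYk : Tendsto Yk atTop (nhds Y)) {O : Set (Matrix (Fin m) (Fin r) ℝ)} (hO : IsOpen O)
    (hHO : HSet Y r ⊆ O) : ∀ᶠ k in atTop, HSet (Yk k) r ⊆ O := by
  by_contra hcon
  rw [not_eventually] at hcon
  obtain ⟨φ, hφ, hφ2⟩ := extraction_of_frequently_atTop hcon
  have : ∀ n, ∃ Z, Z ∈ HSet (Yk (φ n)) r ∧ Z ∉ O := fun n => Set.not_subset.1 (hφ2 n)
  choose Z hZ hZO using this
  haveI := firstCountable_matrix m r
  obtain ⟨Z', -, ψ, hψ, hlim⟩ := (isCompact_stiefel m r).tendsto_subseq (fun n => (hZ n).1)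
  have h1 : Z' ∈ HSet Y r :=
    hset_limit (hYk.comp (hφ.tendsto_atTop.comp hψ.tendsto_atTop)) hlim
      (Eventually.of_forall fun n => hZ (ψ n))
  have h2 : Z' ∈ Oᶜ := hO.isClosed_compl.mem_of_tendsto hlim
    (Eventually.of_forall fun n => hZO (ψ n))
  exact h2 (hHO h1)

lemma froSq_tr {m p r : ℕ} (Z : Matrix (Fin m) (Fin r) ℝ) (Y : Matrix (Fin m) (Fin p) ℝ) :
    froSq (Zᵀ * Y) = trace (Z * Zᵀ * (Y * Yᵀ)) := by
  rw [froSq_eq_trace, transpose_mul, transpose_transpose, ← Matrix.mul_assoc, trace_mul_comm]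
  simp only [Matrix.mul_assoc]

lemma orth_comm {r : ℕ} {Q : Matrix (Fin r) (Fin r) ℝ} (hQ : Qᵀ * Q = 1) : Q * Qᵀ = 1 :=
  mul_eq_one_comm.1 hQ

lemma mul_orth_proj {m r : ℕ} (Z : Matrix (Fin m) (Fin r) ℝ) {Q : Matrix (Fin r) (Fin r) ℝ}
    (hQ : Qᵀ * Q = 1) : (Z * Q) * (Z * Q)ᵀ = Z * Zᵀ := by
  rw [transpose_mul, Matrix.mul_assoc, ← Matrix.mul_assoc Q, orth_comm hQ, Matrix.one_mul]

lemma hset_mul_orth {m p r : ℕ} {Y : Matrix (Fin m) (Fin p) ℝ} {Z : Matrix (Fin m) (Fin r) ℝ}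
    (hZ : Z ∈ HSet Y r) {Q : Matrix (Fin r) (Fin r) ℝ} (hQ : Qᵀ * Q = 1) : Z * Q ∈ HSet Y r := by
  refine ⟨?_, fun W hW => ?_⟩
  · change (Z * Q)ᵀ * (Z * Q) = 1
    have : Zᵀ * Z = 1 := hZ.1
    rw [transpose_mul, Matrix.mul_assoc, ← Matrix.mul_assoc Zᵀ, this, Matrix.one_mul, hQ]
  · rw [froSq_tr (Z * Q), mul_orth_proj Z hQ, ← froSq_tr]
    exact hZ.2 W hW

lemma exists_orth {m r : ℕ} {Z W : Matrix (Fin m) (Fin r) ℝ} (hZ : Z ∈ Stiefel m r)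
    (hW : W ∈ Stiefel m r) (h : Z * Zᵀ = W * Wᵀ) :
    ∃ Q : Matrix (Fin r) (Fin r) ℝ, Qᵀ * Q = 1 ∧ W = Z * Q := by
  have hW' : Wᵀ * W = 1 := hW
  refine ⟨Zᵀ * W, ?_, ?_⟩
  · rw [transpose_mul, transpose_transpose, Matrix.mul_assoc, ← Matrix.mul_assoc Z, h,
      Matrix.mul_assoc W, hW', Matrix.mul_one, hW']
  · rw [← Matrix.mul_assoc, h, Matrix.mul_assoc, hW', Matrix.mul_one]

lemma eigList_orth {r : ℕ} (M Q : Matrix (Fin r) (Fin r) ℝ) (hQ : Qᵀ * Q = 1) :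
    eigList (Q * M) = eigList M := by
  have key : ∀ N : Matrix (Fin r) (Fin r) ℝ, (Finset.univ : Finset (Fin r)).val.map
      (fun j => (Matrix.isHermitian_mul_conjTranspose_self N).eigenvalues j)
      = (N * Nᴴ).charpoly.roots := by
    intro N
    rw [(Matrix.isHermitian_mul_conjTranspose_self N).roots_charpoly_eq_eigenvalues]
    rfl
  unfold eigList
  rw [key, key, conjTranspose_mul, Matrix.mul_assoc, charpoly_mul_comm, ]
  simp only [Matrix.mul_assoc]
  rw [conjTranspose_eq_transpose_of_trivial Q, hQ, Matrix.mul_one]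

lemma nuc_orth {r : ℕ} (M Q : Matrix (Fin r) (Fin r) ℝ) (hQ : Qᵀ * Q = 1) :
    nuclearNorm (Q * M) = nuclearNorm M := by
  unfold nuclearNorm sval
  rw [eigList_orth M Q hQ]

/-- If `S` is PSD and invertible and `R` is orthogonal with `tr S ≤ tr (R S)`, then `R = 1`. -/
lemma orth_eq_one {r : ℕ} {S R : Matrix (Fin r) (Fin r) ℝ} (hS : S.PosSemidef)
    (hdet : IsUnit S.det) (hR : Rᵀ * R = 1) (h : trace S ≤ trace (R * S)) : R = 1 := by
  obtain ⟨B, hB⟩ : ∃ B : Matrix (Fin r) (Fin r) ℝ, S = Bᵀ * B := by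
    open scoped MatrixOrder in
    obtain ⟨B, hB⟩ := CStarAlgebra.nonneg_iff_eq_star_mul_self.mp hS.nonneg
    exact ⟨B, by rw [hB, star_eq_conjTranspose, conjTranspose_eq_transpose_of_trivial]⟩
  have hST : Sᵀ = S := by rw [hB]; simp
  have hR' := orth_comm hR
  have e : froSq (B * (R - 1)) = 2 * trace S - 2 * trace (R * S) := by
    rw [froSq_eq_trace']
    have : (B * (R - 1))ᵀ * (B * (R - 1)) = (Rᵀ - 1) * S * (R - 1) := by
      rw [hB]; simp [Matrix.mul_assoc]
    rw [this]
    have : (Rᵀ - 1) * S * (R - 1) = Rᵀ * (S * R) - S * R - Rᵀ * S + S := by noncomm_ring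
    rw [this, trace_add, trace_sub, trace_sub, trace_mul_comm, Matrix.mul_assoc, hR',
      Matrix.mul_one, trace_mul_comm S R]
    have : trace (Rᵀ * S) = trace (R * S) := by
      rw [← trace_transpose (Rᵀ * S), transpose_mul, transpose_transpose, hST, trace_mul_comm]
    rw [this]; ring
  have h0 : B * (R - 1) = 0 := froSq_eq_zero (le_antisymm (by rw [e]; linarith) (froSq_nonneg _))
  have h1 : S * (R - 1) = 0 := by rw [hB, Matrix.mul_assoc, h0, Matrix.mul_zero]
  have h2 : R - 1 = 0 := by
    have := congrArg (fun T => S⁻¹ * T) h1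
    simpa [← Matrix.mul_assoc, Matrix.nonsing_inv_mul S hdet] using this
  exact sub_eq_zero.1 h2

lemma exists_polar {r : ℕ} (M : Matrix (Fin r) (Fin r) ℝ) (hM : M.det ≠ 0) :
    ∃ Q S : Matrix (Fin r) (Fin r) ℝ, Qᵀ * Q = 1 ∧ S.PosSemidef ∧ IsUnit S.det ∧ M = Q * S := by
  obtain ⟨S, hS, hSS⟩ : ∃ S : Matrix (Fin r) (Fin r) ℝ, S.PosSemidef ∧ S * S = Mᵀ * M := by
    open scoped MatrixOrder in
    have hp : (0 : Matrix (Fin r) (Fin r) ℝ) ≤ Mᵀ * M := by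
      have := posSemidef_conjTranspose_mul_self M
      rw [conjTranspose_eq_transpose_of_trivial] at this
      exact this.nonneg
    exact ⟨CFC.sqrt (Mᵀ * M), nonneg_iff_posSemidef.1 (CFC.sqrt_nonneg _),
      CFC.sqrt_mul_sqrt_self _ hp⟩
  have hd : S.det ≠ 0 := by
    intro h0
    have := congrArg det hSS
    rw [det_mul, det_mul, det_transpose, h0] at this
    simp at this
    exact hM this
  have hu : IsUnit S.det := hd.isUnit
  have hST : Sᵀ = S := by
    have := hS.1
    rwa [IsHermitian, conjTranspose_eq_transpose_of_trivial] at this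
  refine ⟨M * S⁻¹, S, ?_, hS, hu, ?_⟩
  · rw [transpose_mul, transpose_nonsing_inv, hST, Matrix.mul_assoc, ← Matrix.mul_assoc Mᵀ, ← hSS,
      Matrix.mul_assoc S, Matrix.mul_nonsing_inv S hu, Matrix.mul_one, Matrix.nonsing_inv_mul S hu]
  · rw [Matrix.mul_assoc, Matrix.nonsing_inv_mul S hu, Matrix.mul_one]

lemma froSq_sub_stiefel {m r : ℕ} {Z X : Matrix (Fin m) (Fin r) ℝ} (hZ : Z ∈ Stiefel m r)
    (hX : X ∈ Stiefel m r) : froSq (Z - X) = 2 * r - 2 * trace (Zᵀ * X) := by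
  have h1 : Zᵀ * Z = 1 := hZ
  have h2 : Xᵀ * X = 1 := hX
  have h3 : trace (Xᵀ * Z) = trace (Zᵀ * X) := by
    rw [← trace_transpose, transpose_mul, transpose_transpose]
  rw [froSq_eq_trace', transpose_sub, Matrix.sub_mul, Matrix.mul_sub, Matrix.mul_sub, h1, h2,
    trace_sub, trace_sub, trace_sub, h3, trace_one, Fintype.card_fin]
  ring

lemma isProj_unique {m p r : ℕ} {Y : Matrix (Fin m) (Fin p) ℝ} {X Z₁ Z₂ : Matrix (Fin m) (Fin r) ℝ}
    (hX : X ∈ Stiefel m r) (h1 : IsProj Y X Z₁) (h2 : IsProj Y X Z₂)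
    (hP : Z₁ * Z₁ᵀ = Z₂ * Z₂ᵀ) (hdet : (Z₁ᵀ * X).det ≠ 0) : Z₁ = Z₂ := by
  obtain ⟨Q, S, hQ, hS, hu, hM⟩ := exists_polar _ hdet
  have key : ∀ R : Matrix (Fin r) (Fin r) ℝ, Rᵀ * R = 1 → IsProj Y X (Z₁ * R) → R = Q := by
    intro R hR hpr
    have hle := hpr.2 _ (hset_mul_orth h1.1 hQ)
    rw [froSq_sub_stiefel hpr.1.1 hX, froSq_sub_stiefel (hset_mul_orth h1.1 hQ).1 hX,
      transpose_mul, transpose_mul, Matrix.mul_assoc, Matrix.mul_assoc, hM, ← Matrix.mul_assoc Qᵀ,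
      hQ, Matrix.one_mul, ← Matrix.mul_assoc] at hle
    have := orth_eq_one (R := Rᵀ * Q) hS hu (by
      rw [transpose_mul, transpose_transpose, Matrix.mul_assoc, ← Matrix.mul_assoc R,
        orth_comm hR, Matrix.one_mul, hQ]) (by linarith)
    calc R = R * (Rᵀ * Q) := by rw [this, Matrix.mul_one]
      _ = Q := by rw [← Matrix.mul_assoc, orth_comm hR, Matrix.one_mul]
  obtain ⟨R, hR, hRW⟩ := exists_orth h1.1.1 h2.1.1 hP
  have e1 := key 1 (by simp) (by simpa using h1)
  have e2 := key R hR (by rwa [← hRW])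
  rw [hRW, e2, ← e1, Matrix.mul_one]

/-- The symmetric idempotent facts. -/
lemma diag_eq_sum {m : ℕ} {D : Matrix (Fin m) (Fin m) ℝ} (hs : Dᵀ = D) (hi : D * D = D)
    (i : Fin m) : D i i = ∑ j, (D i j) ^ 2 := by
  conv_lhs => rw [← hi, mul_apply]
  refine Finset.sum_congr rfl fun j _ => ?_
  have : D j i = D i j := by conv_lhs => rw [← hs, transpose_apply]
  rw [this, sq]

lemma diag_sq_le {m : ℕ} {D : Matrix (Fin m) (Fin m) ℝ} (hs : Dᵀ = D) (hi : D * D = D)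
    (i : Fin m) : (D i i) ^ 2 ≤ D i i := by
  conv_rhs => rw [diag_eq_sum hs hi i]
  exact Finset.single_le_sum (f := fun j => (D i j) ^ 2) (fun _ _ => sq_nonneg _)
    (Finset.mem_univ i)

lemma offdiag_zero {m : ℕ} {D : Matrix (Fin m) (Fin m) ℝ} (hs : Dᵀ = D) (hi : D * D = D)
    {i j : Fin m} (h : (D i i) ^ 2 = D i i) (hij : i ≠ j) : D i j = 0 := by
  have h1 := diag_eq_sum hs hi i
  rw [← Finset.add_sum_erase _ _ (Finset.mem_univ i), h] at h1
  have h2 : ∑ j ∈ Finset.univ.erase i, (D i j) ^ 2 = 0 := by linarith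
  rw [Finset.sum_eq_zero_iff_of_nonneg (fun _ _ => sq_nonneg _)] at h2
  simpa using h2 j (Finset.mem_erase.2 ⟨hij.symm, Finset.mem_univ _⟩)

/-- Indicator diagonal. -/
noncomputable def indD {m : ℕ} (S : Finset (Fin m)) : Matrix (Fin m) (Fin m) ℝ :=
  diagonal fun i => if i ∈ S then 1 else 0

lemma gap_identity {m : ℕ} (lam d : Fin m → ℝ) (S : Finset (Fin m)) (c : ℝ)
    (hd : ∑ i, d i = S.card) :
    ∑ i, (lam i - c) * ((if i ∈ S then 1 else 0) - d i) = ∑ i ∈ S, lam i - ∑ i, lam i * d i := by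
  have h1 : ∑ i, lam i * (if i ∈ S then (1 : ℝ) else 0) = ∑ i ∈ S, lam i := by simp
  have h2 : ∑ i, (if i ∈ S then (1 : ℝ) else 0) = S.card := by simp
  have : ∀ i, (lam i - c) * ((if i ∈ S then (1 : ℝ) else 0) - d i) =
      lam i * (if i ∈ S then (1 : ℝ) else 0) - lam i * d i
      - c * (if i ∈ S then (1 : ℝ) else 0) + c * d i := fun i => by ring
  simp only [this]
  rw [Finset.sum_add_distrib, Finset.sum_sub_distrib, Finset.sum_sub_distrib, ← Finset.mul_sum,
    ← Finset.mul_sum, h1, h2, hd]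
  ring

lemma gap_term_nonneg {m : ℕ} {lam d : Fin m → ℝ} {S : Finset (Fin m)} {c : ℝ}
    (hd0 : ∀ i, 0 ≤ d i) (hd1 : ∀ i, d i ≤ 1)
    (hS : ∀ i ∈ S, c ≤ lam i) (hS' : ∀ i ∉ S, lam i ≤ c) (i : Fin m) :
    0 ≤ (lam i - c) * ((if i ∈ S then 1 else 0) - d i) := by
  split_ifs with h
  · exact mul_nonneg (by linarith [hS i h]) (by linarith [hd1 i])
  · exact mul_nonneg_of_nonpos_of_nonpos (by linarith [hS' i h]) (by linarith [hd0 i])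

lemma proj_bound {m : ℕ} {lam : Fin m → ℝ} {S : Finset (Fin m)} {c : ℝ}
    (hS : ∀ i ∈ S, c ≤ lam i) (hS' : ∀ i ∉ S, lam i ≤ c)
    {D : Matrix (Fin m) (Fin m) ℝ} (hs : Dᵀ = D) (hi : D * D = D) (ht : trace D = S.card) :
    ∑ i, lam i * D i i ≤ ∑ i ∈ S, lam i := by
  have hq := diag_sq_le hs hi
  have := gap_identity lam (fun i => D i i) S c ht
  have h2 := Finset.sum_nonneg fun i (_ : i ∈ Finset.univ) =>
    gap_term_nonneg (d := fun i => D i i) (fun i => by nlinarith [hq i, sq_nonneg (D i i)])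
      (fun i => by nlinarith [hq i, sq_nonneg (D i i - 1)]) hS hS' i
  linarith

lemma proj_unique {m : ℕ} {lam : Fin m → ℝ} {S : Finset (Fin m)} {c : ℝ}
    (hS : ∀ i ∈ S, c ≤ lam i) (hS' : ∀ i ∉ S, lam i < c)
    {D : Matrix (Fin m) (Fin m) ℝ} (hs : Dᵀ = D) (hi : D * D = D) (ht : trace D = S.card)
    (h : ∑ i ∈ S, lam i ≤ ∑ i, lam i * D i i) : D = indD S := by
  have hq := diag_sq_le hs hi
  have hd0 : ∀ i, 0 ≤ D i i := fun i => by nlinarith [hq i, sq_nonneg (D i i)]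
  have hd1 : ∀ i, D i i ≤ 1 := fun i => by nlinarith [hq i, sq_nonneg (D i i - 1)]
  have hid := gap_identity lam (fun i => D i i) S c ht
  have hnn := gap_term_nonneg (d := fun i => D i i) hd0 hd1 hS (fun i hi => (hS' i hi).le)
  have hz : ∀ i, (lam i - c) * ((if i ∈ S then 1 else 0) - D i i) = 0 := by
    have h0 : ∑ i, (lam i - c) * ((if i ∈ S then 1 else 0) - D i i) = 0 :=
      le_antisymm (by linarith) (Finset.sum_nonneg fun i _ => hnn i)
    rw [Finset.sum_eq_zero_iff_of_nonneg (fun i _ => hnn i)] at h0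
    exact fun i => h0 i (Finset.mem_univ i)
  have hout : ∀ i ∉ S, D i i = 0 := by
    intro i hiS
    have := hz i
    rw [if_neg hiS, mul_eq_zero] at this
    rcases this with h | h
    · linarith [hS' i hiS]
    · linarith
  have hin : ∀ i ∈ S, D i i = 1 := by
    have e1 : ∑ i ∈ S, D i i = S.card := by
      rw [← ht, trace]
      exact Finset.sum_subset (Finset.subset_univ S) fun i _ hiS => hout i hiS
    have e2 : ∑ i ∈ S, (1 - D i i) = 0 := by
      rw [Finset.sum_sub_distrib, e1]; simp
    rw [Finset.sum_eq_zero_iff_of_nonneg (fun i _ => by linarith [hd1 i])] at e2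
    intro i hiS; linarith [e2 i hiS]
  ext i j
  unfold indD
  by_cases hij : i = j
  · subst hij
    rw [diagonal_apply_eq]
    split_ifs with hh
    · exact hin i hh
    · exact hout i hh
  · rw [diagonal_apply_ne _ hij]
    refine offdiag_zero hs hi ?_ hij
    by_cases hh : i ∈ S
    · rw [hin i hh]; norm_num
    · rw [hout i hh]; norm_num

lemma exists_diag {m p : ℕ} (Y : Matrix (Fin m) (Fin p) ℝ) :
    ∃ V : Matrix (Fin m) (Fin m) ℝ, Vᵀ * V = 1 ∧
      Y * Yᵀ = V * diagonal (Matrix.isHermitian_mul_conjTranspose_self Y).eigenvalues * Vᵀ := by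
  set hA := Matrix.isHermitian_mul_conjTranspose_self Y
  refine ⟨hA.eigenvectorUnitary, ?_, ?_⟩
  · have := Unitary.coe_star_mul_self hA.eigenvectorUnitary
    rwa [star_eq_conjTranspose, conjTranspose_eq_transpose_of_trivial] at this
  · have := hA.spectral_theorem
    rw [Unitary.conjStarAlgAut_apply, star_eq_conjTranspose,
      conjTranspose_eq_transpose_of_trivial (hA.eigenvectorUnitary : Matrix (Fin m) (Fin m) ℝ)]
      at this
    rw [← conjTranspose_eq_transpose_of_trivial Y]
    exact this

/-- Rotated projection. -/
lemma rot_facts {m p r : ℕ} {Y : Matrix (Fin m) (Fin p) ℝ} {V : Matrix (Fin m) (Fin m) ℝ}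
    {lam : Fin m → ℝ} (hV : Vᵀ * V = 1) (hA : Y * Yᵀ = V * diagonal lam * Vᵀ)
    {Z : Matrix (Fin m) (Fin r) ℝ} (hZ : Z ∈ Stiefel m r) :
    let D := Vᵀ * (Z * Zᵀ) * V
    Dᵀ = D ∧ D * D = D ∧ trace D = r ∧ froSq (Zᵀ * Y) = ∑ i, lam i * D i i ∧
      Z * Zᵀ = V * D * Vᵀ := by
  have hV' := orth_comm hV
  have hZ' : Zᵀ * Z = 1 := hZ
  intro D
  refine ⟨?_, ?_, ?_, ?_, ?_⟩
  · simp [D, Matrix.mul_assoc]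
  · calc D * D = Vᵀ * Z * (Zᵀ * (V * Vᵀ) * Z) * Zᵀ * V := by simp only [D, Matrix.mul_assoc]
      _ = D := by rw [hV', Matrix.mul_one, hZ']; simp only [D, Matrix.mul_assoc, Matrix.one_mul]
  · rw [show D = Vᵀ * ((Z * Zᵀ) * V) from Matrix.mul_assoc _ _ _, trace_mul_comm, Matrix.mul_assoc,
      hV', Matrix.mul_one, trace_mul_comm, hZ', trace_one, Fintype.card_fin]
  · rw [froSq_tr, hA]
    have : Z * Zᵀ * (V * diagonal lam * Vᵀ) = (Z * Zᵀ * V * diagonal lam) * Vᵀ := by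
      simp only [Matrix.mul_assoc]
    rw [this, trace_mul_comm]
    have : Vᵀ * (Z * Zᵀ * V * diagonal lam) = D * diagonal lam := by
      simp only [D, Matrix.mul_assoc]
    rw [this, trace]
    refine Finset.sum_congr rfl fun i _ => ?_
    rw [diag_apply, mul_diagonal, mul_comm]
  · calc Z * Zᵀ = (V * Vᵀ) * (Z * Zᵀ) * (V * Vᵀ) := by rw [hV']; simp
      _ = _ := by simp only [D, Matrix.mul_assoc]

lemma indD_stiefel {m r : ℕ} {V : Matrix (Fin m) (Fin m) ℝ} (hV : Vᵀ * V = 1)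
    {S : Finset (Fin m)} (hS : S.card = r) :
    ∃ U ∈ Stiefel m r, U * Uᵀ = V * indD S * Vᵀ := by
  classical
  set e := S.orderEmbOfFin hS
  set E : Matrix (Fin m) (Fin r) ℝ := (1 : Matrix (Fin m) (Fin m) ℝ).submatrix id e
  have hE1 : Eᵀ * E = 1 := by
    ext i j
    simp [E, mul_apply, one_apply]
  have hE2 : E * Eᵀ = indD S := by
    ext i j
    simp only [E, mul_apply, submatrix_apply, transpose_apply, id, one_apply, indD, diagonal_apply]
    by_cases hij : i = j
    · subst hij
      by_cases hi : i ∈ S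
      · obtain ⟨k, hk⟩ : ∃ k, e k = i := by
          have : i ∈ Set.range e := by rw [Finset.range_orderEmbOfFin]; exact hi
          exact this
        subst hk
        simp [hi]
      · have : ∀ k, i ≠ e k := fun k hk => hi (hk ▸ Finset.orderEmbOfFin_mem S hS k)
        simp [this, hi]
    · rw [if_neg hij]
      refine Finset.sum_eq_zero fun k _ => ?_
      by_cases h1 : i = e k
      · have : j ≠ e k := fun h => hij (h1.trans h.symm)
        simp [this]
      · simp [h1]
  refine ⟨V * E, ?_, ?_⟩
  · change (V * E)ᵀ * (V * E) = 1
    rw [transpose_mul, Matrix.mul_assoc, ← Matrix.mul_assoc Vᵀ, hV, Matrix.one_mul, hE1]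
  · rw [transpose_mul, ← hE2]; simp only [Matrix.mul_assoc]

lemma rot_back {m : ℕ} {V D D' : Matrix (Fin m) (Fin m) ℝ} (hV : Vᵀ * V = 1)
    (h : D = V * D' * Vᵀ) : Vᵀ * D * V = D' := by
  calc Vᵀ * D * V = (Vᵀ * V) * D' * (Vᵀ * V) := by rw [h]; simp only [Matrix.mul_assoc]
    _ = D' := by rw [hV]; simp

lemma sum_indD {m : ℕ} (lam : Fin m → ℝ) (S : Finset (Fin m)) :
    ∑ i, lam i * indD S i i = ∑ i ∈ S, lam i := by
  simp [indD]

/-- Strict spectral separation gives a unique top projection. -/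
lemma hset_proj_of_sep {m p r : ℕ} {Y : Matrix (Fin m) (Fin p) ℝ} {V : Matrix (Fin m) (Fin m) ℝ}
    {lam : Fin m → ℝ} (hV : Vᵀ * V = 1) (hA : Y * Yᵀ = V * diagonal lam * Vᵀ)
    {S : Finset (Fin m)} {c : ℝ} (hcard : S.card = r)
    (hS : ∀ i ∈ S, c ≤ lam i) (hS' : ∀ i ∉ S, lam i < c)
    {Z : Matrix (Fin m) (Fin r) ℝ} (hZ : Z ∈ HSet Y r) : Z * Zᵀ = V * indD S * Vᵀ := by
  obtain ⟨U, hU, hUP⟩ := indD_stiefel hV hcard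
  obtain ⟨a1, a2, a3, a4, a5⟩ := rot_facts hV hA hZ.1
  obtain ⟨b1, b2, b3, b4, b5⟩ := rot_facts hV hA hU
  have hle := hZ.2 U hU
  rw [a4, b4, rot_back hV hUP, sum_indD] at hle
  rw [a5, proj_unique hS hS' a1 a2 (by rw [a3, hcard]) hle]

lemma hset_of_indD {m p r : ℕ} {Y : Matrix (Fin m) (Fin p) ℝ} {V : Matrix (Fin m) (Fin m) ℝ}
    {lam : Fin m → ℝ} (hV : Vᵀ * V = 1) (hA : Y * Yᵀ = V * diagonal lam * Vᵀ)
    {S : Finset (Fin m)} {c : ℝ} (hcard : S.card = r)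
    (hS : ∀ i ∈ S, c ≤ lam i) (hS' : ∀ i ∉ S, lam i ≤ c) :
    ∃ U ∈ HSet Y r, U * Uᵀ = V * indD S * Vᵀ := by
  obtain ⟨U, hU, hUP⟩ := indD_stiefel hV hcard
  refine ⟨U, ⟨hU, fun W hW => ?_⟩, hUP⟩
  obtain ⟨a1, a2, a3, a4, a5⟩ := rot_facts hV hA hW
  obtain ⟨b1, b2, b3, b4, b5⟩ := rot_facts hV hA hU
  rw [a4, b4, rot_back hV hUP, sum_indD]
  exact proj_bound hS hS' a1 a2 (by rw [a3, hcard])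

lemma froSq_rot {m : ℕ} {V : Matrix (Fin m) (Fin m) ℝ} (hV : Vᵀ * V = 1)
    (D : Matrix (Fin m) (Fin m) ℝ) : froSq (V * D * Vᵀ) = froSq D := by
  have h : (V * D * Vᵀ)ᵀ * (V * D * Vᵀ) = V * (Dᵀ * D * Vᵀ) := by
    calc _ = V * Dᵀ * (Vᵀ * V) * D * Vᵀ := by
          simp only [transpose_mul, transpose_transpose, Matrix.mul_assoc]
      _ = _ := by rw [hV, Matrix.mul_one]; simp only [Matrix.mul_assoc]
  rw [froSq_eq_trace', h, trace_mul_comm, Matrix.mul_assoc, hV, Matrix.mul_one, froSq_eq_trace']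

/-- Top-`r` set of a family of reals. -/
lemma exists_top {m r : ℕ} (hr1 : 1 ≤ r) (hrm : r ≤ m) (lam : Fin m → ℝ) :
    ∃ S : Finset (Fin m), S.card = r ∧ ∃ i₀ ∈ S, (∀ i ∈ S, lam i₀ ≤ lam i) ∧
      ∀ j ∉ S, lam j ≤ lam i₀ := by
  classical
  have hne : (Finset.powersetCard r (Finset.univ : Finset (Fin m))).Nonempty := by
    rw [Finset.powersetCard_nonempty]; simpa using hrm
  obtain ⟨S, hSm, hSmax⟩ := Finset.exists_max_image _ (fun S => ∑ i ∈ S, lam i) hne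
  have hcard : S.card = r := (Finset.mem_powersetCard.1 hSm).2
  have hSne : S.Nonempty := Finset.card_pos.1 (by omega)
  obtain ⟨i₀, hi₀, hmin⟩ := Finset.exists_min_image S lam hSne
  refine ⟨S, hcard, i₀, hi₀, hmin, fun j hj => ?_⟩
  have hj' : j ∉ S.erase i₀ := fun h => hj (Finset.mem_of_mem_erase h)
  have := hSmax (insert j (S.erase i₀)) (by
    rw [Finset.mem_powersetCard]
    refine ⟨Finset.subset_univ _, ?_⟩
    rw [Finset.card_insert_of_notMem hj', Finset.card_erase_of_mem hi₀]; omega)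
  rw [Finset.sum_insert hj', ← Finset.add_sum_erase S lam hi₀] at this
  linarith

/-- Either the top projection is unique, or two maximizers have far apart projections. -/
lemma hset_dichotomy {m p r : ℕ} (hr1 : 1 ≤ r) (hrm : r ≤ m) (Y : Matrix (Fin m) (Fin p) ℝ)
    (hclose : ∀ Z₁ ∈ HSet Y r, ∀ Z₂ ∈ HSet Y r, froSq (Z₁ * Z₁ᵀ - Z₂ * Z₂ᵀ) < 1) :
    ∀ Z₁ ∈ HSet Y r, ∀ Z₂ ∈ HSet Y r, Z₁ * Z₁ᵀ = Z₂ * Z₂ᵀ := by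
  classical
  obtain ⟨V, hV, hA⟩ := exists_diag Y
  set lam := (Matrix.isHermitian_mul_conjTranspose_self Y).eigenvalues
  obtain ⟨S, hcard, i₀, hi₀, hmin, hout⟩ := exists_top hr1 hrm lam
  by_cases hstrict : ∀ j ∉ S, lam j < lam i₀
  · intro Z₁ h1 Z₂ h2
    rw [hset_proj_of_sep hV hA hcard hmin hstrict h1, hset_proj_of_sep hV hA hcard hmin hstrict h2]
  · exfalso
    push Not at hstrict
    obtain ⟨j, hj, hjl⟩ := hstrict
    have hje : lam j = lam i₀ := le_antisymm (hout j hj) hjl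
    have hj' : j ∉ S.erase i₀ := fun h => hj (Finset.mem_of_mem_erase h)
    obtain ⟨U₁, hU₁, e₁⟩ := hset_of_indD hV hA hcard hmin hout
    obtain ⟨U₂, hU₂, e₂⟩ := hset_of_indD (S := insert j (S.erase i₀)) (c := lam i₀) (r := r) hV hA
      (by rw [Finset.card_insert_of_notMem hj', Finset.card_erase_of_mem hi₀]; omega)
      (by
        intro i hi
        rcases Finset.mem_insert.1 hi with rfl | hi
        · exact hjl
        · exact hmin i (Finset.mem_of_mem_erase hi))
      (by
        intro i hi
        by_cases hii : i = i₀
        · rw [hii]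
        · refine hout i fun hiS => hi ?_
          exact Finset.mem_insert_of_mem (Finset.mem_erase.2 ⟨hii, hiS⟩))
    have := hclose U₁ hU₁ U₂ hU₂
    rw [e₁, e₂, ← Matrix.sub_mul, ← Matrix.mul_sub, froSq_rot hV] at this
    have h2 := entry_sq_le_froSq (indD S - indD (insert j (S.erase i₀))) j j
    have h3 : (indD S - indD (insert j (S.erase i₀))) j j = -1 := by simp [indD, hj]
    rw [h3] at h2
    linarith

lemma sep_of_gap {m p r : ℕ} (hr1 : 1 ≤ r) (hrm : r ≤ m)
    (Y : Matrix (Fin m) (Fin p) ℝ) (hgap : sval Y (r + 1) < sval Y r) :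
    ∃ (S : Finset (Fin m)) (c : ℝ), S.card = r ∧
      (∀ i ∈ S, c ≤ (Matrix.isHermitian_mul_conjTranspose_self Y).eigenvalues i) ∧
      (∀ i ∉ S, (Matrix.isHermitian_mul_conjTranspose_self Y).eigenvalues i < c) := by
  classical
  set lam := (Matrix.isHermitian_mul_conjTranspose_self Y).eigenvalues with hlam
  set L := eigList Y with hL
  have hlen : L.length = m := by simp [hL, eigList]
  have hsorted : L.Pairwise (fun a b => b ≤ a) := by
    rw [hL, eigList, List.pairwise_reverse]
    exact Multiset.pairwise_sort _ _
  have hms : (L : Multiset ℝ) = (Finset.univ : Finset (Fin m)).val.map lam := by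
    rw [hL, eigList, ← Multiset.coe_reverse, List.reverse_reverse, Multiset.sort_eq]
  have hlt : L.getD r 0 < L.getD (r - 1) 0 := by
    by_contra hcon
    push Not at hcon
    have := Real.sqrt_le_sqrt hcon
    unfold sval at hgap
    simp only [Nat.add_sub_cancel] at hgap
    linarith
  have hr' : r - 1 < L.length := by omega
  set c := L.getD (r - 1) 0 with hc
  have hc' : c = L[r - 1] := by rw [hc]; simp [hr']
  refine ⟨Finset.univ.filter (fun i => c ≤ lam i), c, ?_, ?_, ?_⟩
  · have h1 : (Finset.univ.filter (fun i => c ≤ lam i)).card = L.countP (fun x => decide (c ≤ x)) := by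
      rw [← Multiset.coe_countP (p := fun x => c ≤ x), hms, Multiset.countP_map]
      rfl
    rw [h1, ← List.take_append_drop r L, List.countP_append]
    have h2 : (L.take r).countP (fun x => decide (c ≤ x)) = (L.take r).length := by
      rw [List.countP_eq_length]
      intro x hx
      obtain ⟨i, hi, rfl⟩ := List.mem_iff_getElem.1 hx
      rw [List.getElem_take, decide_eq_true_eq, hc']
      rw [List.length_take] at hi
      rcases Nat.lt_or_ge i (r - 1) with h | h
      · exact List.pairwise_iff_getElem.1 hsorted _ _ _ _ h
      · have : i = r - 1 := by omega
        subst this; exact le_rfl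
    have h3 : (L.drop r).countP (fun x => decide (c ≤ x)) = 0 := by
      rw [List.countP_eq_zero]
      intro x hx
      obtain ⟨i, hi, rfl⟩ := List.mem_iff_getElem.1 hx
      rw [List.getElem_drop, decide_eq_true_eq, not_le]
      rw [List.length_drop] at hi
      have hrl : r < L.length := by omega
      have hb : L.getD r 0 = L[r] := by simp [hrl]
      rw [hb] at hlt
      refine lt_of_le_of_lt ?_ hlt
      rcases Nat.eq_zero_or_pos i with h | h
      · subst h; simp
      · exact List.pairwise_iff_getElem.1 hsorted _ _ _ _ (by omega)
    rw [h2, h3, List.length_take, hlen]; omega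
  · intro i hi; exact (Finset.mem_filter.1 hi).2
  · intro i hi
    by_contra hcon
    exact hi (Finset.mem_filter.2 ⟨Finset.mem_univ _, not_lt.1 hcon⟩)

lemma det_ne_of_uniq {m p r : ℕ} {Y : Matrix (Fin m) (Fin p) ℝ} {X : Matrix (Fin m) (Fin r) ℝ}
    (huniq : ∀ Z₁ ∈ HSet Y r, ∀ Z₂ ∈ HSet Y r, Z₁ * Z₁ᵀ = Z₂ * Z₂ᵀ) (hU : UniqCond Y r X)
    {Z : Matrix (Fin m) (Fin r) ℝ} (hZ : Z ∈ HSet Y r) : (Zᵀ * X).det ≠ 0 := by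
  refine hU.1 Z ⟨hZ, fun W hW => ?_⟩
  obtain ⟨Q, hQ, rfl⟩ := exists_orth hZ.1 hW.1 (huniq Z hZ W hW)
  rw [transpose_mul, Matrix.mul_assoc, nuc_orth]
  rw [transpose_transpose]; exact orth_comm hQ

lemma froSq_add_le {a b : ℕ} (A B C : Matrix (Fin a) (Fin b) ℝ) :
    froSq (A - B) ≤ 2 * froSq (A - C) + 2 * froSq (B - C) := by
  unfold froSq
  rw [Finset.mul_sum, Finset.mul_sum, ← Finset.sum_add_distrib]
  refine Finset.sum_le_sum fun i _ => ?_
  rw [Finset.mul_sum, Finset.mul_sum, ← Finset.sum_add_distrib]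
  refine Finset.sum_le_sum fun j _ => ?_
  simp only [Matrix.sub_apply]
  nlinarith [sq_nonneg ((A i j - C i j) + (B i j - C i j))]

/-- If `σ_r(Y) > σ_{r+1}(Y)`, `Y^k → Y`, and `X` satisfies the
uniqueness conditions for `(Y,r)`, then eventually `X` satisfies the uniqueness
conditions for `(Y^k,r)` and `T_{Y^k,r}(X) → T_{Y,r}(X)`. -/
theorem stmt5 {m p r : ℕ} (hr1 : 1 ≤ r) (hrm : r ≤ m)
    (Y : Matrix (Fin m) (Fin p) ℝ) (hgap : sval Y (r + 1) < sval Y r)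
    (Yk : ℕ → Matrix (Fin m) (Fin p) ℝ)
    (hYk : Filter.Tendsto (fun k => fro (Yk k - Y)) Filter.atTop (nhds 0))
    (X : Matrix (Fin m) (Fin r) ℝ) (hX : X ∈ Stiefel m r) (hU : UniqCond Y r X) :
    ∃ k₀ : ℕ, (∀ k ≥ k₀, UniqCond (Yk k) r X) ∧
      ∀ Z : Matrix (Fin m) (Fin r) ℝ, IsProj Y X Z →
        ∀ Zk : ℕ → Matrix (Fin m) (Fin r) ℝ, (∀ k ≥ k₀, IsProj (Yk k) X (Zk k)) →
          Filter.Tendsto (fun k => fro (Zk k - Z)) Filter.atTop (nhds 0) := by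
  have hY := tendsto_of_fro hYk
  obtain ⟨V, hV, hA⟩ := exists_diag Y
  obtain ⟨S, c, hcard, hS, hS'⟩ := sep_of_gap hr1 hrm Y hgap
  set P := V * indD S * Vᵀ
  have hP : ∀ Z ∈ HSet Y r, Z * Zᵀ = P := fun Z hZ => hset_proj_of_sep hV hA hcard hS hS' hZ
  have huniq : ∀ Z₁ ∈ HSet Y r, ∀ Z₂ ∈ HSet Y r, Z₁ * Z₁ᵀ = Z₂ * Z₂ᵀ :=
    fun Z₁ h1 Z₂ h2 => by rw [hP Z₁ h1, hP Z₂ h2]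
  have hdet : ∀ Z ∈ HSet Y r, (Zᵀ * X).det ≠ 0 := fun Z hZ => det_ne_of_uniq huniq hU hZ
  have ev1 : ∀ᶠ k in atTop, HSet (Yk k) r ⊆ {Z | froSq (Z * Zᵀ - P) < 1 / 4} := by
    refine hset_usc hY ?_ ?_
    · exact isOpen_lt (continuous_froSq.comp
        ((continuous_id.matrix_mul continuous_id.matrix_transpose).sub continuous_const))
        continuous_const
    · intro Z hZ
      change froSq (Z * Zᵀ - P) < 1 / 4
      rw [hP Z hZ, sub_self]; simp [froSq]
  have ev2 : ∀ᶠ k in atTop, HSet (Yk k) r ⊆ {Z | (Zᵀ * X).det ≠ 0} := by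
    refine hset_usc hY ?_ hdet
    exact isOpen_ne_fun (continuous_id.matrix_transpose.matrix_mul continuous_const).matrix_det
      continuous_const
  obtain ⟨k₀, hk₀⟩ := eventually_atTop.1 (ev1.and ev2)
  refine ⟨k₀, fun k hk => ⟨fun U hUm => (hk₀ k hk).2 hUm.1, fun U₁ U₂ h1 h2 => ?_⟩, ?_⟩
  · refine hset_dichotomy hr1 hrm (Yk k) (fun Z₁ hZ₁ Z₂ hZ₂ => ?_) U₁ h1.1 U₂ h2.1
    have a1 : froSq (Z₁ * Z₁ᵀ - P) < 1 / 4 := (hk₀ k hk).1 hZ₁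
    have a2 : froSq (Z₂ * Z₂ᵀ - P) < 1 / 4 := (hk₀ k hk).1 hZ₂
    linarith [froSq_add_le (Z₁ * Z₁ᵀ) (Z₂ * Z₂ᵀ) P]
  · intro Z hZ Zk hZk
    refine tendsto_fro (tendsto_of_subseq_tendsto fun ns hns => ?_)
    have hev : ∀ᶠ n in atTop, IsProj (Yk (ns n)) X (Zk (ns n)) :=
      (hns.eventually_ge_atTop k₀).mono fun n hn => hZk _ hn
    haveI := firstCountable_matrix m r
    obtain ⟨Z', -, φ, hφ, hlim⟩ := (isCompact_stiefel m r).tendsto_subseq' (x := fun n => Zk (ns n))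
      (hev.mono fun n hn => hn.1.1).frequently
    refine ⟨φ, ?_⟩
    have hev' : ∀ᶠ n in atTop, IsProj (Yk (ns (φ n))) X (Zk (ns (φ n))) :=
      hφ.tendsto_atTop.eventually hev
    have hZ' : Z' ∈ HSet Y r :=
      hset_limit (hY.comp (hns.comp hφ.tendsto_atTop)) hlim (hev'.mono fun n hn => hn.1)
    have hpr : IsProj Y X Z' := by
      refine ⟨hZ', fun W hW => ?_⟩
      obtain ⟨Q, hQ, rfl⟩ := exists_orth hZ'.1 hW.1 (huniq Z' hZ' W hW)
      have c1 : Continuous (fun M : Matrix (Fin m) (Fin r) ℝ => froSq (M - X)) :=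
        continuous_froSq.comp (continuous_id.sub continuous_const)
      have c2 : Continuous (fun M : Matrix (Fin m) (Fin r) ℝ => froSq (M * Q - X)) :=
        continuous_froSq.comp ((continuous_id.matrix_mul continuous_const).sub continuous_const)
      exact le_of_tendsto_of_tendsto ((c1.tendsto Z').comp hlim) ((c2.tendsto Z').comp hlim)
        (hev'.mono fun n hn => hn.2 _ (hset_mul_orth hn.1 hQ))
    have : Z' = Z := isProj_unique hX hpr hZ (huniq _ hZ' _ hZ.1) (hdet _ hZ')
    rw [← this]
    exact hlim
end

section
/- Let Y ∈ ℝ^{m×p} and 1 ≤ r ≤ m with σ_r(Y) > σ_{r+1}(Y). If A, B ∈ O_{m×r} both maximize ‖ZᵀY‖_F² over Z ∈ O_{m×r}, then AAᵀ = BBᵀ. -/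
open Matrix BigOperators Filter

/-- The key counting fact: a gap in a sorted list. -/
lemma gap_card {m r : ℕ} (hr1 : 1 ≤ r) (hrm : r ≤ m) (f : Fin m → ℝ)
    (l : List ℝ) (hl : l = ((Finset.univ : Finset (Fin m)).val.map f |>.sort (· ≤ ·)).reverse)
    (hgap : l.getD r 0 < l.getD (r - 1) 0) :
    (Finset.univ.filter (fun i => l.getD (r - 1) 0 ≤ f i)).card = r := by
  have hlen : l.length = m := by simp [hl]
  have hcoe : (l : Multiset ℝ) = (Finset.univ : Finset (Fin m)).val.map f := by
    rw [hl, Multiset.coe_reverse, Multiset.sort_eq]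
  have hsorted : l.Pairwise (· ≥ ·) := by
    rw [hl, List.pairwise_reverse]
    exact Multiset.pairwise_sort _ _
  have hr : r - 1 < l.length := by omega
  have hmono : ∀ i j (hi : i < l.length) (hj : j < l.length), i ≤ j → l[j] ≤ l[i] := by
    intro i j hi hj hij
    rcases hij.eq_or_lt with h | h
    · subst h; exact le_rfl
    · exact List.pairwise_iff_getElem.1 hsorted i j hi hj h
  set a := l.getD (r - 1) 0 with ha
  have ha' : a = l[r - 1] := by rw [ha, List.getD_eq_getElem _ _ hr]
  have h1 : (Finset.univ.filter (fun i => a ≤ f i)).card = l.countP (fun x => a ≤ x) := by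
    rw [← Multiset.coe_countP, hcoe, Multiset.countP_map]
    rfl
  rw [h1, ← List.take_append_drop r l, List.countP_append]
  have h2 : (l.take r).countP (fun x => a ≤ x) = (l.take r).length := by
    rw [List.countP_eq_length]
    intro x hx
    obtain ⟨i, hi, rfl⟩ := List.mem_iff_getElem.1 hx
    have : i < r ∧ i < l.length := by simpa using hi
    simp only [List.getElem_take, decide_eq_true_eq]
    rw [ha']
    exact hmono _ _ _ _ (by omega)
  have h3 : (l.drop r).countP (fun x => a ≤ x) = 0 := by
    rw [List.countP_eq_zero]
    intro x hx
    obtain ⟨i, hi, rfl⟩ := List.mem_iff_getElem.1 hx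
    have hi' : i < l.length - r := by simpa using hi
    have hrl : r < l.length := by omega
    rw [List.getD_eq_getElem _ _ hrl] at hgap
    simp only [List.getElem_drop, decide_eq_true_eq, not_le]
    exact lt_of_le_of_lt (hmono r (r + i) hrl (by omega) (by omega)) hgap
  rw [h2, h3]
  simp; omega

lemma froSq_eq_trace_s8 {ι κ : Type*} [Fintype ι] [Fintype κ] (M : Matrix ι κ ℝ) :
    froSq M = (M * Mᵀ).trace := by
  simp [froSq, Matrix.trace, Matrix.mul_apply, sq]

/-- The extremal argument in eigen-coordinates. -/
lemma proj_unique_s8 {m r : ℕ} (f : Fin m → ℝ) (a : ℝ)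
    (hS : (Finset.univ.filter (fun i => a ≤ f i)).card = r)
    (Q : Matrix (Fin m) (Fin m) ℝ) (hsym : Qᵀ = Q) (hid : Q * Q = Q) (htr : Q.trace = r)
    (hmax : (∑ i, if a ≤ f i then f i else 0) ≤ ∑ i, Q i i * f i) :
    Q = Matrix.diagonal (fun i => if a ≤ f i then (1 : ℝ) else 0) := by
  have hdiag : ∀ i, Q i i = ∑ k, Q i k ^ 2 := by
    intro i
    conv_lhs => rw [← hid]
    rw [Matrix.mul_apply]
    refine Finset.sum_congr rfl fun k _ => ?_
    have : Q k i = Q i k := congrFun (congrFun hsym i) k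
    rw [this, sq]
  have h0 : ∀ i, 0 ≤ Q i i := fun i => by
    rw [hdiag]; exact Finset.sum_nonneg fun k _ => sq_nonneg _
  have h1 : ∀ i, Q i i ≤ 1 := fun i => by
    have : Q i i ^ 2 ≤ Q i i := by
      conv_rhs => rw [hdiag]
      exact Finset.single_le_sum (f := fun k => Q i k ^ 2) (fun k _ => sq_nonneg _)
        (Finset.mem_univ i)
    nlinarith
  have hE : ∑ i, (if a ≤ f i then (1 : ℝ) else 0) = r := by
    rw [Finset.sum_boole, hS]
  have htr' : ∑ i, Q i i = r := htr
  have hnn : ∀ i, 0 ≤ (f i - a) * ((if a ≤ f i then (1 : ℝ) else 0) - Q i i) := by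
    intro i
    split_ifs with h
    · exact mul_nonneg (by linarith) (by linarith [h1 i])
    · nlinarith [h0 i]
  have hsum : ∑ i, (f i - a) * ((if a ≤ f i then (1 : ℝ) else 0) - Q i i) ≤ 0 := by
    have : ∑ i, (f i - a) * ((if a ≤ f i then (1 : ℝ) else 0) - Q i i)
        = (∑ i, if a ≤ f i then f i else 0) - (∑ i, Q i i * f i)
          - a * (∑ i, (if a ≤ f i then (1 : ℝ) else 0)) + a * ∑ i, Q i i := by
      rw [Finset.mul_sum, Finset.mul_sum, ← Finset.sum_sub_distrib, ← Finset.sum_sub_distrib,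
        ← Finset.sum_add_distrib]
      refine Finset.sum_congr rfl fun i _ => ?_
      split_ifs <;> ring
    rw [this, hE, htr']
    linarith
  have hz := (Finset.sum_eq_zero_iff_of_nonneg (fun i _ => hnn i)).1
    (le_antisymm hsum (Finset.sum_nonneg fun i _ => hnn i))
  have hq : ∀ i, ¬ a ≤ f i → Q i i = 0 := by
    intro i hi
    have := hz i (Finset.mem_univ i)
    rw [if_neg hi] at this
    rcases mul_eq_zero.1 this with h | h
    · exact absurd (by linarith) hi
    · linarith
  have hrow : ∀ i, ¬ a ≤ f i → ∀ k, Q i k = 0 := by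
    intro i hi k
    have h := hq i hi
    rw [hdiag] at h
    have := (Finset.sum_eq_zero_iff_of_nonneg (fun i _ => sq_nonneg _)).1 h k (Finset.mem_univ k)
    exact pow_eq_zero_iff (two_ne_zero) |>.1 this
  set E := Matrix.diagonal (fun i => if a ≤ f i then (1 : ℝ) else 0) with hEdef
  have hEQ : E * Q = Q := by
    ext i k
    rw [hEdef, Matrix.diagonal_mul]
    split_ifs with h
    · simp
    · simp [hrow i h k]
  have hEt : Eᵀ = E := by simp [hEdef]
  have hEE : E * E = E := by
    rw [hEdef, Matrix.diagonal_mul_diagonal]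
    congr 1; ext i; split_ifs <;> simp
  have hQE : Q * E = Q := by
    have := congrArg Matrix.transpose hEQ
    rwa [Matrix.transpose_mul, hsym, hEt] at this
  have hfin : ((E - Q) * (E - Q)ᴴ).trace = 0 := by
    have : (E - Q)ᴴ = E - Q := by
      rw [Matrix.conjTranspose_eq_transpose_of_trivial, Matrix.transpose_sub, hEt, hsym]
    rw [this, Matrix.sub_mul, Matrix.mul_sub, Matrix.mul_sub, hEE, hEQ, hQE, hid, sub_self,
      sub_zero, Matrix.trace_sub, htr, hEdef, Matrix.trace_diagonal, hE, sub_self]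
  have := Matrix.trace_mul_conjTranspose_self_eq_zero_iff.1 hfin
  exact (sub_eq_zero.1 this).symm

lemma maximizer_proj {m p r : ℕ} (hr1 : 1 ≤ r) (hrm : r ≤ m)
    (Y : Matrix (Fin m) (Fin p) ℝ) (hgap : sval Y (r + 1) < sval Y r)
    (U : Matrix (Fin m) (Fin m) ℝ) (hU : Uᵀ * U = 1) (hU' : U * Uᵀ = 1)
    (hY : Y * Yᵀ = U * Matrix.diagonal
      (Matrix.isHermitian_mul_conjTranspose_self Y).eigenvalues * Uᵀ)
    (A : Matrix (Fin m) (Fin r) ℝ) (hA : A ∈ HSet Y r) :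
    A * Aᵀ = U * Matrix.diagonal (fun i => if (eigList Y).getD (r - 1) 0 ≤
      (Matrix.isHermitian_mul_conjTranspose_self Y).eigenvalues i then (1 : ℝ) else 0) * Uᵀ := by
  set f := (Matrix.isHermitian_mul_conjTranspose_self Y).eigenvalues with hf
  have hcard := gap_card hr1 hrm f (eigList Y) rfl (by
    unfold sval at hgap
    rw [Nat.add_sub_cancel] at hgap
    by_contra h
    exact absurd (Real.sqrt_le_sqrt (not_lt.1 h)) (not_le.2 hgap))
  set a := (eigList Y).getD (r - 1) 0
  -- value of the objective
  have hval : ∀ Z : Matrix (Fin m) (Fin r) ℝ,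
      froSq (Zᵀ * Y) = ∑ i, (Uᵀ * (Z * Zᵀ) * U) i i * f i := by
    intro Z
    have e : (Zᵀ * Y) * (Zᵀ * Y)ᵀ = Zᵀ * (U * Matrix.diagonal f * Uᵀ * Z) := by
      rw [← hY]; simp [Matrix.transpose_mul, Matrix.mul_assoc]
    rw [froSq_eq_trace_s8, e, Matrix.trace_mul_comm]
    have e2 : U * Matrix.diagonal f * Uᵀ * Z * Zᵀ
        = U * (Matrix.diagonal f * (Uᵀ * (Z * Zᵀ))) := by simp only [Matrix.mul_assoc]
    rw [e2, Matrix.trace_mul_comm, Matrix.mul_assoc, Matrix.trace]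
    refine Finset.sum_congr rfl fun i _ => ?_
    rw [Matrix.diag_apply, Matrix.diagonal_mul, mul_comm]
  obtain ⟨hAs, hAmax⟩ := hA
  have hAs' : Aᵀ * A = 1 := hAs
  set S := Finset.univ.filter (fun i => a ≤ f i) with hSdef
  let g : Fin r → Fin m := S.orderEmbOfFin hcard
  have hginj : Function.Injective g := (S.orderEmbOfFin hcard).injective
  -- comparison matrix
  let J : Matrix (Fin m) (Fin r) ℝ := (1 : Matrix (Fin m) (Fin m) ℝ).submatrix id g
  have hJJ : Jᵀ * J = 1 := by
    ext i j
    simp [J, Matrix.mul_apply, Matrix.one_apply, hginj.eq_iff, eq_comm]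
  have hJJ' : J * Jᵀ = Matrix.diagonal (fun i => if a ≤ f i then (1 : ℝ) else 0) := by
    have key : ∀ i k, ∑ x : Fin r, (1 : Matrix (Fin m) (Fin m) ℝ) i (g x) *
        (1 : Matrix (Fin m) (Fin m) ℝ) k (g x) = ∑ y ∈ S, (1 : Matrix (Fin m) (Fin m) ℝ) i y *
        (1 : Matrix (Fin m) (Fin m) ℝ) k y := by
      intro i k
      have : S = Finset.univ.map (S.orderEmbOfFin hcard).toEmbedding := by
        rw [Finset.map_orderEmbOfFin_univ]
      conv_rhs => rw [this, Finset.sum_map]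
      rfl
    ext i k
    rw [Matrix.mul_apply]
    simp only [J, Matrix.transpose_apply, Matrix.submatrix_apply, id_eq]
    rw [key, hSdef, Finset.sum_filter]
    by_cases hik : i = k
    · subst hik
      rw [Finset.sum_eq_single i]
      · simp [Matrix.one_apply]
      · intro b _ hb
        simp [Matrix.one_apply, Ne.symm hb]
      · simp
    · rw [Matrix.diagonal_apply_ne _ hik]
      refine Finset.sum_eq_zero fun x _ => ?_
      by_cases hx : i = x
      · subst hx
        simp [Matrix.one_apply, Ne.symm hik]
      · simp [Matrix.one_apply, hx]
  have hW : U * J ∈ Stiefel m r := by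
    change (U * J)ᵀ * (U * J) = 1
    rw [Matrix.transpose_mul, Matrix.mul_assoc, ← Matrix.mul_assoc Uᵀ, hU, Matrix.one_mul, hJJ]
  have hmax := hAmax _ hW
  rw [hval, hval] at hmax
  have e3 : Uᵀ * (U * J * (U * J)ᵀ) * U = J * Jᵀ := by
    calc _ = (Uᵀ * U) * (J * Jᵀ) * (Uᵀ * U) := by
          simp only [Matrix.transpose_mul, Matrix.mul_assoc]
      _ = _ := by rw [hU]; simp
  rw [e3, hJJ'] at hmax
  have hQ := proj_unique_s8 f a hcard (Uᵀ * (A * Aᵀ) * U)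
    (by simp [Matrix.transpose_mul, Matrix.mul_assoc])
    (by
      calc _ = Uᵀ * A * (Aᵀ * (U * Uᵀ) * A) * Aᵀ * U := by simp only [Matrix.mul_assoc]
        _ = _ := by rw [hU', Matrix.mul_one, hAs', Matrix.mul_one]; simp only [Matrix.mul_assoc])
    (by
      rw [Matrix.trace_mul_comm, ← Matrix.mul_assoc, hU', Matrix.one_mul, Matrix.trace_mul_comm,
        hAs']
      simp)
    (by simpa using hmax)
  rw [← hQ]
  calc A * Aᵀ = (U * Uᵀ) * (A * Aᵀ) * (U * Uᵀ) := by rw [hU']; simp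
    _ = _ := by simp only [Matrix.mul_assoc]

/-- If `σ_r(Y) > σ_{r+1}(Y)` and `A, B ∈ O_{m×r}` both maximize
`‖Zᵀ Y‖_F²` over `O_{m×r}`, then `A Aᵀ = B Bᵀ`. -/
theorem stmt8 {m p r : ℕ} (hr1 : 1 ≤ r) (hrm : r ≤ m)
    (Y : Matrix (Fin m) (Fin p) ℝ) (hgap : sval Y (r + 1) < sval Y r)
    (A B : Matrix (Fin m) (Fin r) ℝ) (hA : A ∈ HSet Y r) (hB : B ∈ HSet Y r) :
    A * Aᵀ = B * Bᵀ := by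
  have hH := Matrix.isHermitian_mul_conjTranspose_self Y
  let U : Matrix (Fin m) (Fin m) ℝ := (hH.eigenvectorUnitary : Matrix (Fin m) (Fin m) ℝ)
  have hU : Uᵀ * U = 1 := by
    have := Unitary.coe_star_mul_self hH.eigenvectorUnitary
    rwa [Matrix.star_eq_conjTranspose, Matrix.conjTranspose_eq_transpose_of_trivial] at this
  have hU' : U * Uᵀ = 1 := mul_eq_one_comm.1 hU
  have hY : Y * Yᵀ = U * Matrix.diagonal hH.eigenvalues * Uᵀ := by
    have := hH.spectral_theorem
    rw [Unitary.conjStarAlgAut_apply, Matrix.star_eq_conjTranspose] at this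
    rw [← Matrix.conjTranspose_eq_transpose_of_trivial Y,
      ← Matrix.conjTranspose_eq_transpose_of_trivial U]
    exact this
  rw [maximizer_proj hr1 hrm Y hgap U hU hU' hY A hA,
    maximizer_proj hr1 hrm Y hgap U hU hU' hY B hB]
end
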